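/- There is a universal constant C > 0 such that: for all integers n, k, K with 1 ≤ k < K ≤ n/64, if μ and ν are symmetric probability distributions on {0,1}^n that are perfectly k-wise indistinguishable, then μ and ν are statistically (K, C·K^{3/2}·exp(−k²/(1156·K)))-wise indistinguishable; that is, for every S ⊆ {1,…,n} with |S| = K, the total variation distance between the marginals μ|_S and ν|_S is at most C·K^{3/2}·exp(−k²/(1156·K)). -/

import Mathlib

open Finset

/-- Hamming weight of a Boolean string. -/
def wt {n : ℕ} (x : Fin n → Bool) : ℕ := (Finset.univ.filter (fun i => x i = true)).card

/-- `μ` is a probability distribution on `{0,1}^n`. -/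
def IsProb {n : ℕ} (μ : (Fin n → Bool) → ℝ) : Prop :=
  (∀ x, 0 ≤ μ x) ∧ ∑ x : Fin n → Bool, μ x = 1

/-- `μ` is symmetric: `μ x` depends only on the Hamming weight of `x`. -/
def SymmDist {n : ℕ} (μ : (Fin n → Bool) → ℝ) : Prop := ∀ x y, wt x = wt y → μ x = μ y

/-- The probability, under `μ`, of agreeing with `z` on the coordinates in `S`;
this describes the marginal distribution `μ|_S`. -/
def marg {n : ℕ} (μ : (Fin n → Bool) → ℝ) (S : Finset (Fin n)) (z : Fin n → Bool) : ℝ :=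
  ∑ x : Fin n → Bool, if ∀ i ∈ S, x i = z i then μ x else 0

/-- Perfect `k`-wise indistinguishability: equality of all marginals on sets of
size at most `k`. -/
def PerfIndist {n : ℕ} (μ ν : (Fin n → Bool) → ℝ) (k : ℕ) : Prop :=
  ∀ S : Finset (Fin n), S.card ≤ k → ∀ z, marg μ S z = marg ν S z

/-- `T` is a `{0,1}`-valued statistical test depending only on the coordinates in `S`.
The total variation distance between `μ|_S` and `ν|_S` is the supremum of
`|E_μ[T] - E_ν[T]|` over all such tests. -/
def TestOn {n : ℕ} (S : Finset (Fin n)) (T : (Fin n → Bool) → ℝ) : Prop :=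
  (∀ x, T x = 0 ∨ T x = 1) ∧ ∀ x y, (∀ i ∈ S, x i = y i) → T x = T y


/-- Generalized binomial coefficient. -/
noncomputable def cb (z : ℂ) (w : ℕ) : ℂ := ∏ i ∈ Finset.range w, (z - i) / (i + 1)

lemma cb_succ (z : ℂ) (w : ℕ) : cb z (w + 1) = cb z w * ((z - w) / (w + 1)) := by
  rw [cb, cb, Finset.prod_range_succ]

lemma cb_nat (j w : ℕ) : cb (j : ℂ) w = (j.choose w : ℂ) := by
  induction w with
  | zero => simp [cb]
  | succ w ih =>
    rw [cb_succ, ih]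
    have h := Nat.choose_succ_right_eq j w
    have hw : (w : ℂ) + 1 ≠ 0 := by exact_mod_cast Nat.succ_ne_zero w
    rw [← mul_div_assoc, div_eq_iff hw]
    rcases le_or_gt w j with hj | hj
    · have h2 := congrArg (Nat.cast : ℕ → ℂ) h
      push_cast [Nat.cast_sub hj] at h2
      exact h2.symm
    · rw [Nat.choose_eq_zero_of_lt hj, Nat.choose_eq_zero_of_lt (by omega)]; simp

lemma choose_mul_pow_le (N w : ℕ) (s : ℝ) (hs : 0 ≤ s) :
    (N.choose w : ℝ) * s ^ w ≤ (1 + s) ^ N := by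
  rcases le_or_gt w N with h | h
  · rw [add_comm 1 s, add_pow]
    have := Finset.single_le_sum (f := fun m => s ^ m * 1 ^ (N - m) * (N.choose m : ℝ))
      (s := Finset.range (N+1)) (fun i _ => by positivity) (Finset.mem_range.mpr (Nat.lt_succ_of_le h))
    simp only [one_pow, mul_one] at this ⊢
    linarith [mul_comm (s^w) (N.choose w : ℝ)]
  · rw [Nat.choose_eq_zero_of_lt h]; simp; positivity

lemma norm_cb_succ (z : ℂ) (w : ℕ) :
    ‖cb z (w + 1)‖ = ‖cb z w‖ * (‖z - w‖ / (w + 1)) := by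
  rw [cb_succ, norm_mul, norm_div]
  congr 2
  have : ((w : ℂ) + 1) = ((w + 1 : ℕ) : ℂ) := by push_cast; rfl
  rw [this, Complex.norm_natCast]; push_cast; rfl

lemma cb_crude (z : ℂ) (N : ℕ) (hN : ‖z‖ ≤ N) (w : ℕ) :
    ‖cb z w‖ ≤ ((N + w).choose w : ℝ) := by
  induction w with
  | zero => simp [cb]
  | succ w ih =>
    rw [norm_cb_succ]
    have h1 : ‖z - w‖ ≤ N + w := by
      calc ‖z - w‖ ≤ ‖z‖ + ‖(w : ℂ)‖ := norm_sub_le _ _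
        _ ≤ N + w := by rw [Complex.norm_natCast]; linarith
    have h2 := Nat.add_one_mul_choose_eq (N + w) w
    have h3 : ((N : ℝ) + w + 1) * ((N + w).choose w : ℝ) = ((N + w + 1).choose (w + 1) : ℝ) * (w + 1) := by
      exact_mod_cast h2
    have hw : (0 : ℝ) < w + 1 := by positivity
    rw [← mul_div_assoc, div_le_iff₀ hw, ← add_assoc, ← h3]
    have : ‖cb z w‖ * ‖z - w‖ ≤ ((N + w).choose w : ℝ) * (N + w) := by gcongr
    nlinarith [Nat.cast_nonneg (α := ℝ) ((N + w).choose w)]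

lemma cb_fine (z : ℂ) (N : ℕ) (hN : z.re + 3 * (‖z‖ - z.re) ≤ N) (w : ℕ)
    (hw : (w : ℝ) < z.re / 2 + 1) :
    ‖cb z w‖ ≤ (N.choose w : ℝ) := by
  induction w with
  | zero => simp [cb]
  | succ w ih =>
    push_cast at hw
    have ih := ih (by linarith)
    rw [norm_cb_succ]
    have hd : 0 ≤ ‖z‖ - z.re := sub_nonneg.mpr (Complex.re_le_norm z)
    have hwx : (w : ℝ) < z.re / 2 := by linarith
    have hw0 : (0 : ℝ) ≤ w := by positivity
    have h1 : ‖z - w‖ ≤ N - w := by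
      refine le_trans ?_ (show z.re - w + 3 * (‖z‖ - z.re) ≤ N - w by linarith)
      apply le_of_sq_le_sq _ (by linarith)
      have e1 : ‖z - w‖ ^ 2 = (z.re - w) ^ 2 + z.im ^ 2 := by
        rw [Complex.sq_norm, Complex.normSq_apply]; simp; ring
      have e2 : ‖z‖ ^ 2 = z.re ^ 2 + z.im ^ 2 := by
        rw [Complex.sq_norm, Complex.normSq_apply]; ring
      rw [e1]
      set d := ‖z‖ - z.re with hdd
      have : z.im ^ 2 = d ^ 2 + 2 * d * z.re := by rw [hdd]; linarith
      rw [this]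
      nlinarith
    have hwN : w ≤ N := by
      have : (w : ℝ) ≤ N := by linarith
      exact_mod_cast this
    have h2 := congrArg (Nat.cast : ℕ → ℝ) (Nat.choose_succ_right_eq N w)
    push_cast [Nat.cast_sub hwN] at h2
    have hw : (0 : ℝ) < w + 1 := by positivity
    rw [← mul_div_assoc, div_le_iff₀ hw, h2]
    gcongr

lemma cb_mid (z : ℂ) (N : ℕ) (hN : z.re + 3 * (‖z‖ - z.re) ≤ N) (hz : ‖z‖ / 2 ≤ z.re)
    (s : ℝ) (hs : 0 ≤ s) (hs1 : s ≤ 1 / 63) (w : ℕ) :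
    ‖cb z w‖ * s ^ w ≤ (1 + s) ^ N := by
  induction w with
  | zero => simp [cb]; exact one_le_pow₀ (by linarith)
  | succ w ih =>
    rcases lt_or_ge (w : ℝ) (z.re / 2) with h | h
    · refine le_trans ?_ (choose_mul_pow_le N (w+1) s hs)
      gcongr
      exact cb_fine z N hN (w+1) (by push_cast; linarith)
    · rw [norm_cb_succ, pow_succ]
      have hw0 : (0 : ℝ) ≤ w := by positivity
      have h1 : ‖z - w‖ ≤ 5 * w := by
        calc ‖z - w‖ ≤ ‖z‖ + ‖(w : ℂ)‖ := norm_sub_le _ _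
        _ ≤ 5 * w := by rw [Complex.norm_natCast]; linarith
      have h2 : ‖z - w‖ / (w + 1) * s ≤ 1 := by
        have : ‖z - w‖ / (w + 1) ≤ 5 := by
          rw [div_le_iff₀ (by positivity)]; linarith
        have h0 : 0 ≤ ‖z - w‖ / (w + 1) := by positivity
        nlinarith
      calc _ = (‖cb z w‖ * s ^ w) * (‖z - w‖ / (w + 1) * s) := by ring
        _ ≤ (‖cb z w‖ * s ^ w) * 1 := by gcongr
        _ ≤ _ := by simpa using ih

lemma cb_bound (z : ℂ) (s : ℝ) (hs : 0 ≤ s) (hs1 : s ≤ 1 / 63) (w : ℕ) :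
    ‖cb z w‖ * s ^ w ≤ 2 * Real.exp (Real.log (1 + s) * z.re + 4 * s * (‖z‖ - z.re)) := by
  have hd : 0 ≤ ‖z‖ - z.re := sub_nonneg.mpr (Complex.re_le_norm z)
  have hL : Real.log (1 + s) ≤ s := by
    have := Real.log_le_sub_one_of_pos (show 0 < 1 + s by linarith); linarith
  have hL0 : 0 ≤ Real.log (1 + s) := Real.log_nonneg (by linarith)
  have hz0 := norm_nonneg z
  have hre := Complex.abs_re_le_norm z
  have h2 : Real.exp (2 * s) ≤ 2 := by
    have h3 : Real.exp (2 * s) ≤ Real.exp (1/2) := Real.exp_le_exp.mpr (by linarith)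
    have h4 : Real.exp (1/2) ≤ 1 / (1 - 1/2) := by
      have h5 := Real.add_one_le_exp (-(1/2 : ℝ))
      rw [Real.exp_neg] at h5
      rw [le_div_iff₀ (by norm_num)]
      have h6 := Real.exp_pos (1/2 : ℝ)
      have := mul_le_mul_of_nonneg_left h5 h6.le
      rw [mul_inv_cancel₀ h6.ne'] at this
      linarith
    linarith
  rcases le_or_gt (‖z‖ / 2) z.re with h | h
  · set a := z.re + 3 * (‖z‖ - z.re) with ha
    have ha0 : 0 ≤ a := by linarith
    have := cb_mid z ⌈a⌉₊ (Nat.le_ceil a) h s hs hs1 w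
    refine this.trans ?_
    have hc := Nat.ceil_lt_add_one ha0
    have e : (1 + s) ^ ⌈a⌉₊ = Real.exp (Real.log (1 + s) * ⌈a⌉₊) := by
      rw [mul_comm, Real.exp_nat_mul, Real.exp_log (by linarith)]
    rw [e]
    have : Real.exp (Real.log (1 + s) * ⌈a⌉₊) ≤ Real.exp (2 * s + (Real.log (1 + s) * z.re + 4 * s * (‖z‖ - z.re))) := by
      apply Real.exp_le_exp.mpr
      have h7 : Real.log (1 + s) * ⌈a⌉₊ ≤ Real.log (1 + s) * (a + 1) := by gcongr
      have h8 : Real.log (1 + s) * (‖z‖ - z.re) ≤ s * (‖z‖ - z.re) := by gcongr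
      have h9 : 0 ≤ s * (‖z‖ - z.re) := by positivity
      rw [ha] at h7
      nlinarith
    refine this.trans ?_
    rw [Real.exp_add]
    gcongr
  · set N := ⌈‖z‖⌉₊ with hN
    have h1 := cb_crude z N (Nat.le_ceil _) w
    have hc := Nat.ceil_lt_add_one hz0
    have h3 := choose_mul_pow_le (N + w) w (2 * s) (by linarith)
    have h4 : ‖cb z w‖ * s ^ w ≤ (1 + 2 * s) ^ N := by
      have h5 : ‖cb z w‖ * (2 * s) ^ w ≤ (1 + 2 * s) ^ N * 2 ^ w := by
        calc _ ≤ ((N + w).choose w : ℝ) * (2 * s) ^ w := by gcongr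
          _ ≤ (1 + 2 * s) ^ (N + w) := h3
          _ = (1 + 2 * s) ^ N * (1 + 2 * s) ^ w := pow_add _ _ _
          _ ≤ _ := by gcongr; linarith
      rw [mul_pow] at h5
      have : (0 : ℝ) < 2 ^ w := by positivity
      nlinarith
    refine h4.trans ?_
    have h5 : (1 + 2 * s) ^ N ≤ Real.exp (2 * s * N) := by
      rw [mul_comm _ (N : ℝ), Real.exp_nat_mul]
      gcongr
      linarith [Real.add_one_le_exp (2 * s)]
    refine h5.trans ?_
    have : Real.exp (2 * s * N) ≤ Real.exp (2 * s + (Real.log (1 + s) * z.re + 4 * s * (‖z‖ - z.re))) := by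
      apply Real.exp_le_exp.mpr
      have h7 : 2 * s * N ≤ 2 * s * (‖z‖ + 1) := by gcongr
      rcases le_or_gt 0 z.re with h0 | h0
      · have : 0 ≤ Real.log (1 + s) * z.re := by positivity
        nlinarith
      · have : s * z.re ≤ Real.log (1 + s) * z.re := mul_le_mul_of_nonpos_right hL h0.le
        nlinarith
    refine this.trans ?_
    rw [Real.exp_add]
    gcongr

/-- auxiliary Stirling quantity -/
noncomputable def phi (m : ℕ) : ℝ := (m.factorial : ℝ) * Real.exp m / (m : ℝ) ^ m

lemma phi_pos (m : ℕ) : 0 < phi m := by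
  unfold phi
  rcases Nat.eq_zero_or_pos m with h | h
  · subst h; simp
  · positivity

lemma phi_mono_succ (m : ℕ) : phi m ≤ phi (m + 1) := by
  rcases Nat.eq_zero_or_pos m with h | h
  · subst h; simp [phi]
  have hm : (0 : ℝ) < m := by exact_mod_cast h
  unfold phi
  rw [div_le_div_iff₀ (by positivity) (by positivity)]
  have key : ((m : ℝ) + 1) ^ m ≤ Real.exp 1 * (m : ℝ) ^ m := by
    have h1 : (1 + 1 / (m : ℝ)) ^ m ≤ Real.exp 1 := by
      calc (1 + 1 / (m : ℝ)) ^ m ≤ (Real.exp (1 / m)) ^ m := by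
            gcongr; linarith [Real.add_one_le_exp (1 / (m : ℝ))]
        _ = Real.exp 1 := by rw [← Real.exp_nat_mul]; congr 1; field_simp
    calc ((m : ℝ) + 1) ^ m = (1 + 1 / (m : ℝ)) ^ m * (m : ℝ) ^ m := by
          rw [← mul_pow]; congr 1; field_simp
      _ ≤ _ := by gcongr
  push_cast [Nat.factorial_succ]
  rw [Real.exp_add, pow_succ]
  have hp : 0 ≤ (m.factorial : ℝ) * Real.exp m * (m + 1) := by positivity
  nlinarith [mul_le_mul_of_nonneg_left key hp]

lemma phi_le (m : ℕ) : phi (m + 1) ≤ Real.exp 1 * ((m : ℝ) + 1) := by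
  induction m with
  | zero => simp [phi]
  | succ m ih =>
    have h1 : phi (m + 1 + 1) * ((m : ℝ) + 1) ≤ phi (m + 1) * (m + 1 + 1) := by
      unfold phi
      have key : Real.exp 1 * ((m : ℝ) + 1) ^ (m + 2) ≤ ((m : ℝ) + 2) ^ (m + 2) := by
        have hh : Real.exp (1 / ((m : ℝ) + 2)) * ((m : ℝ) + 1) ≤ (m : ℝ) + 2 := by
          have h5 := Real.add_one_le_exp (-(1 / ((m : ℝ) + 2)))
          rw [Real.exp_neg] at h5
          have h6 := Real.exp_pos (1 / ((m : ℝ) + 2))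
          have h7 := mul_le_mul_of_nonneg_left h5 h6.le
          rw [mul_inv_cancel₀ h6.ne'] at h7
          have h8 : -(1 / ((m : ℝ) + 2)) + 1 = ((m : ℝ) + 1) / (m + 2) := by field_simp; ring
          rw [h8, ← mul_div_assoc, div_le_one (by positivity)] at h7
          exact h7
        calc Real.exp 1 * ((m : ℝ) + 1) ^ (m + 2)
            = (Real.exp (1 / ((m : ℝ) + 2)) * ((m : ℝ) + 1)) ^ (m + 2) := by
              rw [mul_pow, ← Real.exp_nat_mul]; congr 2; push_cast; field_simp
          _ ≤ _ := by gcongr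
      rw [div_mul_eq_mul_div, div_mul_eq_mul_div, div_le_div_iff₀ (by positivity) (by positivity)]
      rw [Nat.factorial_succ (m + 1)]
      push_cast
      rw [Real.exp_add ((m : ℝ) + 1)]
      have e : (m : ℝ) + 1 + 1 = m + 2 := by ring
      rw [e]
      have hp : 0 ≤ (((m+1).factorial : ℕ) : ℝ) * Real.exp (m + 1) * (m + 2) := by positivity
      calc _ = (((m+1).factorial : ℕ) : ℝ) * Real.exp (m + 1) * (m + 2) * (Real.exp 1 * ((m : ℝ) + 1) ^ (m + 2)) := by ring
        _ ≤ (((m+1).factorial : ℕ) : ℝ) * Real.exp (m + 1) * (m + 2) * (((m : ℝ) + 2) ^ (m + 2)) := by gcongr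
        _ = _ := by ring
    have hm : (0 : ℝ) < (m : ℝ) + 1 := by positivity
    push_cast
    have h2 : phi (m + 1) * (m + 1 + 1) ≤ Real.exp 1 * ((m : ℝ) + 1) * (m + 1 + 1) := by gcongr
    have h3 : phi (m + 1 + 1) * ((m : ℝ) + 1) ≤ (Real.exp 1 * (m + 1 + 1)) * ((m : ℝ) + 1) := by linarith
    exact le_of_mul_le_mul_right h3 hm

lemma binom_mode (n K : ℕ) (hK : 1 ≤ K) (hn : K < n) :
    (1 + (K : ℝ) / (n - K)) ^ n ≤ Real.exp 1 * K * (n.choose K : ℝ) * ((K : ℝ) / (n - K)) ^ K := by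
  obtain ⟨d, rfl⟩ := Nat.exists_eq_add_of_lt hn
  set D := d + 1 with hD
  have hn' : K + d + 1 = K + D := by omega
  rw [hn']
  have hKr : (0 : ℝ) < K := by exact_mod_cast hK
  have hDr : (0 : ℝ) < D := by exact_mod_cast Nat.succ_pos d
  have hsub : ((K + D : ℕ) : ℝ) - K = D := by push_cast; ring
  rw [hsub]
  have h1 : phi D ≤ phi (K + D) := by
    have : Monotone phi := monotone_nat_of_le_succ phi_mono_succ
    exact this (by omega)
  have h2 : phi K ≤ Real.exp 1 * K := by
    obtain ⟨m, rfl⟩ := Nat.exists_eq_add_of_le' hK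
    simpa using phi_le m
  have h3 : phi K * phi D ≤ Real.exp 1 * K * phi (K + D) := by
    have := (phi_pos D).le
    have := (phi_pos K).le
    gcongr
  have hc : (((K + D).choose K : ℕ) : ℝ) * K.factorial * D.factorial = ((K + D).factorial : ℝ) := by
    have := Nat.choose_mul_factorial_mul_factorial (show K ≤ K + D by omega)
    rw [Nat.add_sub_cancel_left] at this
    exact_mod_cast this
  unfold phi at h3
  rw [← hc] at h3
  have e1 : 1 + (K : ℝ) / D = ((K + D : ℕ) : ℝ) / D := by push_cast; field_simp; ring
  rw [e1, div_pow, div_pow, pow_add (D : ℝ) K D]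
  have hN : (0 : ℝ) < ((K + D : ℕ) : ℝ) := by exact_mod_cast (by omega)
  set NN : ℝ := ((K + D : ℕ) : ℝ) with hNN
  have hexp : Real.exp NN = Real.exp K * Real.exp D := by
    rw [hNN, Nat.cast_add, Real.exp_add]
  rw [hexp] at h3
  have hKf : (0 : ℝ) < K.factorial := by positivity
  have hDf : (0 : ℝ) < D.factorial := by positivity
  have hE1 := Real.exp_pos (K : ℝ)
  have hE2 := Real.exp_pos (D : ℝ)
  have hP : 0 < (K.factorial : ℝ) * D.factorial * Real.exp K * Real.exp D := by positivity
  have h4 : ((K.factorial : ℝ) * D.factorial * Real.exp K * Real.exp D) * (1 / ((K : ℝ) ^ K * (D : ℝ) ^ D)) ≤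
     ((K.factorial : ℝ) * D.factorial * Real.exp K * Real.exp D) *
      (Real.exp 1 * K * ((K + D).choose K : ℝ) / NN ^ (K + D)) := by
    convert h3 using 1
    · field_simp
    · field_simp
  have h5 := le_of_mul_le_mul_left h4 hP
  rw [div_le_div_iff₀ (by positivity) (by positivity)] at h5
  rw [← mul_div_assoc, div_le_div_iff₀ (by positivity) (by positivity)]
  have : (0 : ℝ) < (D : ℝ) ^ K := by positivity
  nlinarith [mul_le_mul_of_nonneg_right h5 (by positivity : (0:ℝ) ≤ (D : ℝ) ^ K)]

open Polynomial in
lemma tri_span (b : ℕ → ℂ[X]) (hb : ∀ m, (b m).degree = m) (d : ℕ) :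
    ∀ p : ℂ[X], p.natDegree ≤ d → ∃ c : ℕ → ℂ, p = ∑ m ∈ Finset.range (d + 1), C (c m) * b m := by
  have hnd : ∀ m, (b m).natDegree = m := fun m => natDegree_eq_of_degree_eq_some (hb m)
  have hlc : ∀ m, (b m).coeff m ≠ 0 := by
    intro m
    have : (b m).leadingCoeff ≠ 0 := by
      rw [Ne, leadingCoeff_eq_zero]; intro h
      have := hb m; rw [h] at this; simp at this
    rwa [leadingCoeff, hnd] at this
  induction d with
  | zero =>
    intro p hp
    refine ⟨fun _ => p.coeff 0 / (b 0).coeff 0, ?_⟩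
    have h1 := eq_C_of_natDegree_le_zero hp
    have h2 := eq_C_of_natDegree_le_zero (hnd 0).le
    simp only [zero_add, Finset.sum_range_one]
    rw [h2, ← C_mul]
    conv_lhs => rw [h1]
    simp only [coeff_C_zero]
    rw [div_mul_cancel₀ _ (hlc 0)]
  | succ d ih =>
    intro p hp
    set a := p.coeff (d + 1) / (b (d + 1)).coeff (d + 1) with ha
    have h1 : (p - C a * b (d + 1)).natDegree ≤ d := by
      rw [natDegree_le_iff_coeff_eq_zero]
      intro N hN
      rw [coeff_sub, coeff_C_mul]
      rcases Nat.lt_or_ge (d + 1) N with h | h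
      · rw [coeff_eq_zero_of_natDegree_lt (by omega), coeff_eq_zero_of_natDegree_lt (by rw [hnd]; omega)]
        simp
      · have : N = d + 1 := by omega
        rw [this, ha, div_mul_cancel₀ _ (hlc _), sub_self]
    obtain ⟨c, hc⟩ := ih _ h1
    refine ⟨fun m => if m = d + 1 then a else c m, ?_⟩
    rw [Finset.sum_range_succ]
    simp only [if_true]
    rw [← sub_eq_iff_eq_add, hc]
    apply Finset.sum_congr rfl
    intro m hm
    rw [if_neg (by have := Finset.mem_range.mp hm; omega)]

lemma cheb_eval (w : ℂ) (hw : w ≠ 0) (m : ℕ) :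
    (Polynomial.Chebyshev.T ℂ m).eval ((w + w⁻¹) / 2) = (w ^ m + w⁻¹ ^ m) / 2 := by
  have h := Polynomial.Chebyshev.T_complex_cosh (Complex.log w) m
  have e : ∀ m : ℕ, Complex.cosh (((m : ℕ) : ℂ) * Complex.log w) = (w ^ m + w⁻¹ ^ m) / 2 := by
    intro m
    rw [Complex.cosh, ← mul_neg, Complex.exp_nat_mul, Complex.exp_nat_mul, Complex.exp_neg,
      Complex.exp_log hw]
  have e1 := e 1
  simp only [Nat.cast_one, one_mul, pow_one] at e1
  rw [e1] at h
  rw [h, ← e]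
  simp

lemma cheb_le (m : ℕ) (x : ℝ) (hx : |x| ≤ 1) :
    ‖(Polynomial.Chebyshev.T ℂ m).eval (x : ℂ)‖ ≤ 1 := by
  have h := Polynomial.Chebyshev.complex_ofReal_eval_T x m
  rw [← h, Complex.norm_real]
  have h2 := abs_le.mp hx
  rw [← Real.cos_arccos h2.1 h2.2, Polynomial.Chebyshev.T_real_cos]
  exact Real.abs_cos_le_one _

open Polynomial in
lemma coeff_bound (p : ℂ[X]) (ρ M : ℝ) (hρ : 0 < ρ) (h : ∀ w : ℂ, ‖w‖ = ρ → ‖p.eval w‖ ≤ M) (m : ℕ) :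
    ‖p.coeff m‖ * ρ ^ m ≤ M := by
  have h1 := Complex.norm_iteratedDeriv_le_of_forall_mem_sphere_norm_le (f := fun z => p.eval z)
    (c := 0) m hρ p.differentiable.diffContOnCl (C := M) (by
      intro z hz; apply h; simpa using hz)
  have h2 : iteratedDeriv m (fun z => p.eval z) 0 = (m.factorial : ℂ) * p.coeff m := by
    have : ∀ (m : ℕ), iteratedDeriv m (fun z => p.eval z) = fun z => (derivative^[m] p).eval z := by
      intro m
      induction m with
      | zero => simp
      | succ m ih =>
        rw [iteratedDeriv_succ, ih]
        funext z
        rw [Function.iterate_succ_apply', Polynomial.deriv]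
    rw [this]
    simp only
    rw [← coeff_zero_eq_eval_zero, coeff_iterate_derivative]
    simp [Nat.descFactorial_self]
  rw [h2, norm_mul, Complex.norm_natCast, le_div_iff₀ (by positivity)] at h1
  have hf : (0 : ℝ) < m.factorial := by positivity
  have : (m.factorial : ℝ) * (‖p.coeff m‖ * ρ ^ m) ≤ m.factorial * M := by linarith
  exact le_of_mul_le_mul_left this hf

open Polynomial in
lemma cheb_trunc (g : ℂ[X]) (k K : ℕ) (hkK : k < K) (hg : g.natDegree ≤ K) (ρ B : ℝ) (hρ : 1 ≤ ρ)
    (hB : ∀ w : ℂ, ‖w‖ = ρ → ‖g.eval ((w + w⁻¹) / 2)‖ ≤ B) :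
    ∃ L : ℂ[X], L.natDegree ≤ k ∧ ∀ x : ℝ, |x| ≤ 1 →
      ‖g.eval (x : ℂ) - L.eval (x : ℂ)‖ ≤ 2 * K * B / ρ ^ k := by
  have hdeg : ∀ m : ℕ, (Chebyshev.T ℂ m).degree = m := by
    intro m; rw [Chebyshev.degree_T]; simp
  obtain ⟨c, hc⟩ := tri_span (fun m => Chebyshev.T ℂ m) hdeg K g hg
  have hρ0 : 0 < ρ := by linarith
  have hB0 : 0 ≤ B := le_trans (norm_nonneg _) (hB (ρ : ℂ) (by simp [abs_of_pos hρ0]))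
  -- coefficient bound
  have hcoef : ∀ m ∈ Finset.Ico (k + 1) (K + 1), ‖c m‖ ≤ 2 * B / ρ ^ k := by
    intro l hl
    rw [Finset.mem_Ico] at hl
    set P : ℂ[X] := ∑ m ∈ Finset.range (K + 1), C (c m / 2) * (X ^ (K + m) + X ^ (K - m)) with hP
    have hPe : ∀ w : ℂ, ‖w‖ = ρ → ‖P.eval w‖ ≤ ρ ^ K * B := by
      intro w hw
      have hw0 : w ≠ 0 := by intro h; rw [h] at hw; simp at hw; linarith
      have : P.eval w = w ^ K * g.eval ((w + w⁻¹) / 2) := by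
        rw [hc, hP, eval_finsetSum, eval_finsetSum, Finset.mul_sum]
        apply Finset.sum_congr rfl
        intro m hm
        have hm := Finset.mem_range.mp hm
        rw [eval_mul, eval_mul, eval_C, eval_C, cheb_eval w hw0]
        simp only [eval_add, eval_pow, eval_X]
        have e : w ^ (K - m) = w ^ K * w⁻¹ ^ m := by
          rw [inv_pow, pow_sub₀ _ hw0 (by omega)]
        rw [e, pow_add]; ring
      rw [this, norm_mul, norm_pow, hw]
      gcongr
      exact hB w hw
    have h1 := coeff_bound P ρ _ hρ0 hPe (K + l)
    have h2 : P.coeff (K + l) = c l / 2 := by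
      rw [hP, finsetSum_coeff, Finset.sum_eq_single l]
      · rw [coeff_C_mul, coeff_add, coeff_X_pow, coeff_X_pow, if_pos rfl, if_neg (by omega)]; simp
      · intro m hm hml
        rw [coeff_C_mul, coeff_add, coeff_X_pow, coeff_X_pow, if_neg (by omega), if_neg (by omega)]
        simp
      · intro h; exact absurd (Finset.mem_range.mpr (by omega)) h
    rw [h2, norm_div, pow_add] at h1
    have h3 : ‖c l‖ * ρ ^ l ≤ 2 * B := by
      have hp : 0 < ρ ^ K := by positivity
      have : ρ ^ K * (‖c l‖ * ρ ^ l) ≤ ρ ^ K * (2 * B) := by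
        simp only [Complex.norm_ofNat] at h1
        linarith
      exact le_of_mul_le_mul_left this hp
    rw [le_div_iff₀ (by positivity)]
    refine le_trans ?_ h3
    gcongr
    omega
  refine ⟨∑ m ∈ Finset.range (k + 1), C (c m) * Chebyshev.T ℂ m, ?_, ?_⟩
  · apply natDegree_sum_le_of_forall_le
    intro m hm
    refine (natDegree_C_mul_le _ _).trans ?_
    rw [Chebyshev.natDegree_T]
    have := Finset.mem_range.mp hm
    simp; omega
  · intro x hx
    have : g.eval (x : ℂ) - (∑ m ∈ Finset.range (k + 1), C (c m) * Chebyshev.T ℂ m).eval (x : ℂ)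
        = ∑ m ∈ Finset.Ico (k + 1) (K + 1), c m * (Chebyshev.T ℂ m).eval (x : ℂ) := by
      conv_lhs => rw [hc]
      rw [← Finset.sum_range_add_sum_Ico _ (show k + 1 ≤ K + 1 by omega), eval_add, add_sub_cancel_left,
        eval_finsetSum]
      simp
    rw [this]
    calc _ ≤ ∑ m ∈ Finset.Ico (k + 1) (K + 1), ‖c m * (Chebyshev.T ℂ m).eval (x : ℂ)‖ := norm_sum_le _ _
      _ ≤ ∑ m ∈ Finset.Ico (k + 1) (K + 1), 2 * B / ρ ^ k := by
        apply Finset.sum_le_sum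
        intro m hm
        rw [norm_mul]
        calc _ ≤ ‖c m‖ * 1 := by gcongr; exact cheb_le m x hx
          _ ≤ _ := by rw [mul_one]; exact hcoef m hm
      _ = ((K - k : ℕ) : ℝ) * (2 * B / ρ ^ k) := by
        rw [Finset.sum_const, Nat.card_Ico, nsmul_eq_mul]; congr 2; omega
      _ ≤ K * (2 * B / ρ ^ k) := by gcongr; omega
      _ = _ := by ring

open Polynomial in
/-- polynomial version of `cb` -/
noncomputable def cbP (p : ℂ[X]) (w : ℕ) : ℂ[X] :=
  ∏ i ∈ Finset.range w, ((p - C (i : ℂ)) * C (((i : ℂ) + 1)⁻¹))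

open Polynomial in
lemma cbP_eval (p : ℂ[X]) (w : ℕ) (z : ℂ) : (cbP p w).eval z = cb (p.eval z) w := by
  unfold cbP cb
  rw [eval_prod]
  apply Finset.prod_congr rfl
  intro i _
  rw [eval_mul, eval_sub, eval_C, eval_C, div_eq_mul_inv]

open Polynomial in
lemma cbP_natDegree (p : ℂ[X]) (hp : p.natDegree ≤ 1) (w : ℕ) : (cbP p w).natDegree ≤ w := by
  unfold cbP
  refine (natDegree_prod_le _ _).trans ?_
  calc _ ≤ ∑ i ∈ Finset.range w, 1 := by
        apply Finset.sum_le_sum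
        intro i _
        refine (natDegree_mul_C_le _ _).trans ?_
        refine (natDegree_sub_le _ _).trans ?_
        simp [hp]
    _ = w := by simp

open Polynomial in
/-- acceptance polynomial -/
noncomputable def qP (n K : ℕ) (τ : ℕ → ℝ) : ℂ[X] :=
  ∑ w ∈ Finset.range (K + 1), C ((τ w / n.choose K : ℝ) : ℂ) * (cbP X w * cbP (C (n : ℂ) - X) (K - w))

open Polynomial in
lemma qP_natDegree (n K : ℕ) (τ : ℕ → ℝ) : (qP n K τ).natDegree ≤ K := by
  unfold qP
  apply natDegree_sum_le_of_forall_le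
  intro w hw
  have hw := Finset.mem_range.mp hw
  refine (natDegree_C_mul_le _ _).trans (natDegree_mul_le.trans ?_)
  have h1 := cbP_natDegree X natDegree_X_le w
  have h2 := cbP_natDegree (C (n : ℂ) - X) ((natDegree_sub_le _ _).trans (by simp)) (K - w)
  omega

lemma qP_eval (n K : ℕ) (τ : ℕ → ℝ) (z : ℂ) : (qP n K τ).eval z =
    ∑ w ∈ Finset.range (K + 1), ((τ w / n.choose K : ℝ) : ℂ) * (cb z w * cb (n - z) (K - w)) := by
  unfold qP
  rw [Polynomial.eval_finsetSum]
  apply Finset.sum_congr rfl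
  intro w _
  simp [cbP_eval]

lemma qP_bound (n K : ℕ) (hK : 1 ≤ K) (hn : 64 * K ≤ n) (τ : ℕ → ℝ) (hτ : ∀ w, |τ w| ≤ 1)
    (δ : ℝ) (hδ : 0 ≤ δ) (w : ℂ) (hw : ‖w‖ = 1 + δ) :
    ‖(qP n K τ).eval ((n : ℂ) / 2 * (1 + (w + w⁻¹) / 2))‖ ≤
      4 * (K + 1) * (Real.exp 1 * K) * Real.exp (3 * K * δ ^ 2) := by
  set z : ℂ := (n : ℂ) / 2 * (1 + (w + w⁻¹) / 2) with hz
  have hw0 : w ≠ 0 := by intro h; rw [h] at hw; simp at hw; linarith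
  have hKr : (1 : ℝ) ≤ K := by exact_mod_cast hK
  have hnr : 64 * (K : ℝ) ≤ n := by exact_mod_cast hn
  have hsum : ‖z‖ + ‖(n : ℂ) - z‖ ≤ n + n * δ ^ 2 / 2 := by
    have e1 : z = (n : ℂ) / 4 * ((1 + w) ^ 2 / w) := by rw [hz]; field_simp; ring
    have e2 : (n : ℂ) - z = (n : ℂ) / 4 * (-(1 - w) ^ 2 / w) := by rw [hz]; field_simp; ring
    rw [e2, e1]
    simp only [norm_mul, norm_div, norm_neg, norm_pow, Complex.norm_natCast, hw, Complex.norm_ofNat]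
    have e3 : ‖1 + w‖ ^ 2 + ‖1 - w‖ ^ 2 = 2 * (1 + (1 + δ) ^ 2) := by
      have := parallelogram_law_with_norm ℝ (1 : ℂ) w
      rw [hw, norm_one] at this
      linarith
    have e4 : (n : ℝ) / 4 * (‖1 + w‖ ^ 2 / (1 + δ)) + (n : ℝ) / 4 * (‖1 - w‖ ^ 2 / (1 + δ))
      = (n : ℝ) / 4 * ((2 * (1 + (1 + δ) ^ 2)) / (1 + δ)) := by rw [← e3]; ring
    rw [e4]
    have e5 : (2 * (1 + (1 + δ) ^ 2)) / (1 + δ) ≤ 4 + 2 * δ ^ 2 := by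
      rw [div_le_iff₀ (by linarith)]
      nlinarith [pow_nonneg hδ 3]
    calc _ ≤ (n : ℝ) / 4 * (4 + 2 * δ ^ 2) := by gcongr
      _ = _ := by ring
  set s : ℝ := (K : ℝ) / (n - K) with hs
  have hden : (0 : ℝ) < (n : ℝ) - K := by linarith
  have hs0 : 0 < s := by positivity
  have hs1 : s ≤ 1 / 63 := by rw [hs, div_le_div_iff₀ hden (by norm_num)]; linarith
  have hsn : s * n ≤ 3 / 2 * K := by
    rw [hs, div_mul_eq_mul_div, div_le_iff₀ hden]
    nlinarith
  have hmode := binom_mode n K hK (by omega)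
  rw [← hs] at hmode
  have hc0 : (0 : ℝ) < n.choose K := by
    exact_mod_cast Nat.choose_pos (show K ≤ n by omega)
  rw [qP_eval]
  have hterm : ∀ v ∈ Finset.range (K + 1),
      ‖((τ v / n.choose K : ℝ) : ℂ) * (cb z v * cb (n - z) (K - v))‖ ≤
        4 * (Real.exp 1 * K) * Real.exp (3 * K * δ ^ 2) := by
    intro v hv
    have hv := Finset.mem_range.mp hv
    have h1 := cb_bound z s hs0.le hs1 v
    have h2 := cb_bound ((n : ℂ) - z) s hs0.le hs1 (K - v)
    have h3 := mul_le_mul h1 h2 (by positivity) (by positivity)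
    have hre : ((n : ℂ) - z).re = n - z.re := by simp
    have h4 : ‖cb z v‖ * ‖cb (n - z) (K - v)‖ * s ^ K ≤ 4 * ((1 + s) ^ n * Real.exp (3 * K * δ ^ 2)) := by
      calc _ = ‖cb z v‖ * s ^ v * (‖cb (n - z) (K - v)‖ * s ^ (K - v)) := by
            rw [show s ^ K = s ^ v * s ^ (K - v) by rw [← pow_add]; congr 1; omega]; ring
        _ ≤ _ := h3
        _ = 4 * Real.exp (Real.log (1 + s) * n + 4 * s * (‖z‖ + ‖(n : ℂ) - z‖ - n)) := by
            rw [hre]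
            rw [show ∀ a b : ℝ, 2 * Real.exp a * (2 * Real.exp b) = 4 * (Real.exp a * Real.exp b) by intros; ring,
              ← Real.exp_add]
            congr 2; ring
        _ ≤ 4 * Real.exp (Real.log (1 + s) * n + 3 * K * δ ^ 2) := by
            have : 4 * s * (‖z‖ + ‖(n : ℂ) - z‖ - n) ≤ 3 * K * δ ^ 2 := by
              calc _ ≤ 4 * s * (n * δ ^ 2 / 2) := by gcongr; linarith
                _ = 2 * (s * n) * δ ^ 2 := by ring
                _ ≤ 2 * (3 / 2 * K) * δ ^ 2 := by gcongr
                _ = _ := by ring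
            gcongr
        _ = _ := by
            rw [Real.exp_add, mul_comm (Real.log _) (n : ℝ), Real.exp_nat_mul, Real.exp_log (by linarith)]
    have h5 : ‖cb z v‖ * ‖cb (n - z) (K - v)‖ ≤ 4 * ((Real.exp 1 * K * n.choose K) * Real.exp (3 * K * δ ^ 2)) := by
      have hp : 0 < s ^ K := by positivity
      refine le_of_mul_le_mul_right (h4.trans ?_) hp
      calc _ ≤ 4 * ((Real.exp 1 * K * n.choose K * s ^ K) * Real.exp (3 * K * δ ^ 2)) := by gcongr
        _ = _ := by ring
    rw [norm_mul, norm_mul, Complex.norm_real, Real.norm_eq_abs, abs_div, abs_of_pos hc0]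
    calc _ ≤ 1 / (n.choose K : ℝ) * (4 * ((Real.exp 1 * K * n.choose K) * Real.exp (3 * K * δ ^ 2))) := by
          gcongr; exact hτ v
      _ = _ := by field_simp
  calc _ ≤ _ := norm_sum_le _ _
    _ ≤ ∑ v ∈ Finset.range (K + 1), 4 * (Real.exp 1 * K) * Real.exp (3 * K * δ ^ 2) := Finset.sum_le_sum hterm
    _ = _ := by rw [Finset.sum_const, Finset.card_range, nsmul_eq_mul]; push_cast; ring

/-- indicator string of a set -/
def ind {n : ℕ} (X : Finset (Fin n)) : Fin n → Bool := fun i => decide (i ∈ X)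

lemma wt_ind {n : ℕ} (X : Finset (Fin n)) : wt (ind X) = X.card := by
  unfold wt ind; congr 1; ext i; simp

lemma sum_ind {n : ℕ} (f : (Fin n → Bool) → ℝ) : ∑ x, f x = ∑ X : Finset (Fin n), f (ind X) := by
  refine Finset.sum_bij' (fun x _ => Finset.univ.filter (fun i => x i = true)) (fun X _ => ind X)
    (by simp) (by simp) ?_ ?_ ?_
  · intro x _; funext i; simp [ind]
  · intro X _; ext i; simp [ind]
  · intro x _; congr 1; funext i; simp [ind]

lemma wt_le {n : ℕ} (x : Fin n → Bool) : wt x ≤ n := by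
  unfold wt; exact (Finset.card_le_univ _).trans (by simp)

lemma symm_exists {n : ℕ} (μ : (Fin n → Bool) → ℝ) (h : SymmDist μ) :
    ∃ m : ℕ → ℝ, ∀ x, μ x = m (wt x) := by
  classical
  refine ⟨fun j => if h : ∃ x : Fin n → Bool, wt x = j then μ h.choose else 0, ?_⟩
  intro x
  have hx : ∃ y : Fin n → Bool, wt y = wt x := ⟨x, rfl⟩
  simp only [dif_pos hx]
  exact h _ _ hx.choose_spec.symm

lemma sum_wt {n : ℕ} (f : ℕ → ℝ) :
    ∑ x : Fin n → Bool, f (wt x) = ∑ j ∈ Finset.range (n + 1), (n.choose j : ℝ) * f j := by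
  rw [sum_ind]
  simp only [wt_ind]
  rw [← Finset.powerset_univ, Finset.sum_powerset_apply_card]
  simp

lemma moment {n : ℕ} (μ ν : (Fin n → Bool) → ℝ) (k : ℕ) (h : PerfIndist μ ν k) (d : ℕ) (hd : d ≤ k) :
    ∑ x, (μ x - ν x) * ((wt x).choose d : ℝ) = 0 := by
  have h1 : ∀ x : Fin n → Bool, ((wt x).choose d : ℝ) =
      ∑ U ∈ Finset.powersetCard d (Finset.univ : Finset (Fin n)), if ∀ i ∈ U, x i = true then (1:ℝ) else 0 := by
    intro x
    rw [← Finset.sum_filter, Finset.sum_const, nsmul_eq_mul, mul_one, wt, ← Finset.card_powersetCard]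
    congr 2
    ext U
    simp only [Finset.mem_powersetCard, Finset.mem_filter, Finset.subset_univ, true_and]
    constructor
    · rintro ⟨a, b⟩; exact ⟨b, fun i hi => (Finset.mem_filter.mp (a hi)).2⟩
    · rintro ⟨a, b⟩; exact ⟨fun i hi => Finset.mem_filter.mpr ⟨Finset.mem_univ _, b i hi⟩, a⟩
  simp only [h1, Finset.mul_sum]
  rw [Finset.sum_comm]
  apply Finset.sum_eq_zero
  intro U hU
  have hc := (Finset.mem_powersetCard.mp hU).2
  have h2 := h U (by omega) (fun _ => true)
  unfold marg at h2
  rw [← sub_eq_zero, ← Finset.sum_sub_distrib] at h2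
  refine Eq.trans ?_ h2
  apply Finset.sum_congr rfl
  intro x _
  split_ifs <;> simp

lemma choose_id (n K w v : ℕ) (hw : w ≤ K) (hK : K ≤ n) (hv : v ≤ n - K) :
    n.choose (w + v) * ((w + v).choose w * (n - (w + v)).choose (K - w)) =
      n.choose K * K.choose w * (n - K).choose v := by
  have h1 := Nat.choose_mul (n := n) (k := w + v) (s := w) (by omega)
  have h2 := Nat.choose_mul (n := n) (k := K) (s := w) hw
  obtain ⟨a, rfl⟩ := Nat.exists_eq_add_of_le hw
  have h3 := Nat.choose_mul (n := n - w) (k := a + v) (s := v) (by omega)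
  have h4 := Nat.choose_mul (n := n - w) (k := a + v) (s := a) (by omega)
  have h5 : (a + v).choose v = (a + v).choose a := by
    have := Nat.choose_symm_add (a := a) (b := v); exact this.symm
  rw [h5] at h3
  simp only [Nat.add_sub_cancel_left, Nat.add_sub_cancel] at *
  rw [← mul_assoc, h1, h2, ← Nat.sub_sub, ← Nat.sub_sub, mul_assoc, mul_assoc, ← h3, ← h4]

lemma hyper_sum (n K w : ℕ) (hw : w ≤ K) (hK : K ≤ n) (m : ℕ → ℝ) :
    ∑ j ∈ Finset.range (n + 1), (n.choose j : ℝ) * (m j * ((j.choose w : ℝ) * ((n - j).choose (K - w) : ℝ))) =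
      (n.choose K : ℝ) * (K.choose w : ℝ) * ∑ v ∈ Finset.range (n - K + 1), ((n - K).choose v : ℝ) * m (w + v) := by
  have h1 : Finset.Ico w (w + (n - K) + 1) ⊆ Finset.range (n + 1) := by
    intro j hj; rw [Finset.mem_Ico] at hj; rw [Finset.mem_range]; omega
  rw [← Finset.sum_subset h1, Finset.sum_Ico_eq_sum_range, Finset.mul_sum]
  · rw [show w + (n - K) + 1 - w = n - K + 1 by omega]
    apply Finset.sum_congr rfl
    intro v hv
    have hv := Finset.mem_range.mp hv
    have := congrArg (Nat.cast : ℕ → ℝ) (choose_id n K w v hw hK (by omega))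
    push_cast at this
    linear_combination m (w + v) * this
  · intro j hj hj2
    rw [Finset.mem_range] at hj
    rw [Finset.mem_Ico] at hj2
    rcases Nat.lt_or_ge j w with h | h
    · rw [Nat.choose_eq_zero_of_lt h]; simp
    · rw [Nat.choose_eq_zero_of_lt (show n - j < K - w by omega)]; simp

/-- symmetrized test -/
noncomputable def tau {n : ℕ} (S : Finset (Fin n)) (T : (Fin n → Bool) → ℝ) (w : ℕ) : ℝ :=
  (∑ U ∈ Finset.powersetCard w S, T (ind U)) / (S.card.choose w : ℝ)

lemma tau_le {n : ℕ} (S : Finset (Fin n)) (T : (Fin n → Bool) → ℝ) (hT : TestOn S T) (w : ℕ) :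
    |tau S T w| ≤ 1 := by
  unfold tau
  rw [abs_div, Nat.abs_cast]
  apply div_le_one_of_le₀ _ (by positivity)
  calc _ ≤ ∑ U ∈ Finset.powersetCard w S, |T (ind U)| := Finset.abs_sum_le_sum_abs _ _
    _ ≤ ∑ U ∈ Finset.powersetCard w S, 1 := by
      apply Finset.sum_le_sum
      intro U _
      rcases hT.1 (ind U) with h | h <;> rw [h] <;> simp
    _ = _ := by simp

lemma test_formula {n : ℕ} (S : Finset (Fin n)) (T : (Fin n → Bool) → ℝ) (hT : TestOn S T)
    (μ : (Fin n → Bool) → ℝ) (hμ : SymmDist μ) :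
    ∑ x, μ x * T x = ∑ x, μ x * ∑ w ∈ Finset.range (S.card + 1),
      tau S T w / (n.choose S.card : ℝ) * (((wt x).choose w : ℝ) * ((n - wt x).choose (S.card - w) : ℝ)) := by
  obtain ⟨m, hm⟩ := symm_exists μ hμ
  simp only [hm]
  have hKn : S.card ≤ n := (Finset.card_le_univ S).trans (by simp)
  set K := S.card with hK
  have hc0 : (n.choose K : ℝ) ≠ 0 := by
    exact_mod_cast (Nat.choose_pos hKn).ne'
  rw [sum_wt (n := n) (fun j => m j * ∑ w ∈ Finset.range (K + 1),
      tau S T w / (n.choose K : ℝ) * ((j.choose w : ℝ) * ((n - j).choose (K - w) : ℝ)))]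
  have hR : ∑ j ∈ Finset.range (n + 1), (n.choose j : ℝ) * (m j * ∑ w ∈ Finset.range (K + 1),
      tau S T w / (n.choose K : ℝ) * ((j.choose w : ℝ) * ((n - j).choose (K - w) : ℝ))) =
      ∑ w ∈ Finset.range (K + 1), (K.choose w : ℝ) * tau S T w *
        ∑ v ∈ Finset.range (n - K + 1), ((n - K).choose v : ℝ) * m (w + v) := by
    simp only [Finset.mul_sum]
    rw [Finset.sum_comm]
    apply Finset.sum_congr rfl
    intro w hw
    have hw := Finset.mem_range.mp hw
    have h := hyper_sum n K w (by omega) hKn m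
    rw [← Finset.mul_sum]
    calc _ = tau S T w / (n.choose K : ℝ) * ∑ j ∈ Finset.range (n + 1), (n.choose j : ℝ) * (m j * ((j.choose w : ℝ) * ((n - j).choose (K - w) : ℝ))) := by
          rw [Finset.mul_sum]; apply Finset.sum_congr rfl; intros; ring
      _ = _ := by rw [h]; field_simp
  rw [hR, sum_ind]
  have hL : ∑ X : Finset (Fin n), m (wt (ind X)) * T (ind X) =
      ∑ U ∈ S.powerset, ∑ V ∈ Sᶜ.powerset, m (U.card + V.card) * T (ind U) := by
    rw [← Finset.sum_product']
    refine Finset.sum_bij' (fun X _ => (X ∩ S, X ∩ Sᶜ)) (fun p _ => p.1 ∪ p.2) ?_ (by simp) ?_ ?_ ?_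
    · intro X _; simp [Finset.inter_subset_right]
    · intro X _; simp [← Finset.inter_union_distrib_left]
    · rintro ⟨U, V⟩ hp
      simp only [Finset.mem_product, Finset.mem_powerset] at hp
      ext i
      · have a := @hp.1 i; have b := @hp.2 i
        simp only [Finset.mem_compl] at b
        simp only [Finset.mem_inter, Finset.mem_union]; tauto
      · have a := @hp.1 i; have b := @hp.2 i
        simp only [Finset.mem_compl] at b
        simp only [Finset.mem_inter, Finset.mem_union, Finset.mem_compl]; tauto
    · intro X _
      rw [wt_ind]
      have e1 : (X ∩ S).card + (X ∩ Sᶜ).card = X.card := by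
        rw [← Finset.card_union_of_disjoint, ← Finset.inter_union_distrib_left]
        · simp
        · exact Disjoint.mono Finset.inter_subset_right Finset.inter_subset_right (disjoint_compl_right : Disjoint S Sᶜ)
      have e2 : T (ind X) = T (ind (X ∩ S)) := by
        apply hT.2
        intro i hi; simp [ind, hi]
      simp only
      rw [e1, e2]
  rw [hL, Finset.sum_powerset]
  apply Finset.sum_congr rfl
  intro w hw
  have hw := Finset.mem_range.mp hw
  have hcw : (K.choose w : ℝ) ≠ 0 := by exact_mod_cast (Nat.choose_pos (show w ≤ K by omega)).ne'
  have e3 : (K.choose w : ℝ) * tau S T w = ∑ U ∈ Finset.powersetCard w S, T (ind U) := by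
    unfold tau; rw [← hK]; field_simp
  rw [e3, Finset.sum_mul]
  apply Finset.sum_congr rfl
  intro U hU
  rw [(Finset.mem_powersetCard.mp hU).2, ← Finset.sum_mul, mul_comm]
  congr 1
  rw [Finset.sum_powerset_apply_card (fun v => m (w + v)), Finset.card_compl, Fintype.card_fin, ← hK]
  simp

open Polynomial in
lemma cbP_degree (m : ℕ) : (cbP X m).degree = m := by
  unfold cbP
  rw [degree_prod]
  have : ∀ i ∈ Finset.range m, ((X - C (i : ℂ)) * C (((i : ℂ) + 1)⁻¹)).degree = 1 := by
    intro i _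
    rw [degree_mul_C, degree_X_sub_C]
    apply inv_ne_zero
    exact_mod_cast Nat.succ_ne_zero i
  rw [Finset.sum_congr rfl this]; simp

open Polynomial in
lemma poly_zero {n : ℕ} (μ ν : (Fin n → Bool) → ℝ) (k : ℕ) (h : PerfIndist μ ν k) (L : ℂ[X])
    (hL : L.natDegree ≤ k) : ∑ x, ((μ x - ν x : ℝ) : ℂ) * L.eval (wt x : ℂ) = 0 := by
  obtain ⟨c, hc⟩ := tri_span (fun m => cbP X m) cbP_degree k L hL
  rw [hc]
  simp only [eval_finsetSum, eval_mul, eval_C, cbP_eval, eval_X, cb_nat, Finset.mul_sum]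
  rw [Finset.sum_comm]
  apply Finset.sum_eq_zero
  intro d hd
  have hd := Finset.mem_range.mp hd
  have h1 := congrArg (Complex.ofReal) (moment μ ν k h d (by omega))
  push_cast at h1 ⊢
  calc _ = c d * ∑ x, ((μ x : ℂ) - ν x) * ((wt x).choose d : ℂ) := by
        rw [Finset.mul_sum]; apply Finset.sum_congr rfl; intros; ring
    _ = 0 := by rw [h1, mul_zero]

open Polynomial in
lemma main_bound {n k K : ℕ} (hk : 1 ≤ k) (hkK : k < K) (hn : 64 * K ≤ n)
    (μ ν : (Fin n → Bool) → ℝ) (hμ : IsProb μ) (hν : IsProb ν) (sμ : SymmDist μ) (sν : SymmDist ν)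
    (h : PerfIndist μ ν k) (S : Finset (Fin n)) (hS : S.card = K) (T : (Fin n → Bool) → ℝ)
    (hT : TestOn S T) :
    |∑ x, μ x * T x - ∑ x, ν x * T x| ≤
      16 * K * (K + 1) * K * Real.exp 1 * Real.exp (-(k : ℝ) ^ 2 / (64 * K)) := by
  have hKr : (1 : ℝ) < K := by exact_mod_cast (by omega : 1 < K)
  have hkr : (1 : ℝ) ≤ k := by exact_mod_cast hk
  have hkKr : (k : ℝ) < K := by exact_mod_cast hkK
  have hn0 : (0 : ℝ) < n := by exact_mod_cast (by omega : 0 < n)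
  have hnc : (n : ℂ) ≠ 0 := by exact_mod_cast (by omega : n ≠ 0)
  set δ : ℝ := k / (8 * K) with hδ
  have hδ0 : 0 ≤ δ := by positivity
  have hδ1 : δ ≤ 1 := by rw [hδ, div_le_one (by linarith)]; linarith
  set q := qP n K (tau S T) with hq
  set g : ℂ[X] := q.comp (C ((n : ℂ) / 2) * (1 + X)) with hg
  set B : ℝ := 4 * (K + 1) * (Real.exp 1 * K) * Real.exp (3 * K * δ ^ 2) with hB
  have hgd : g.natDegree ≤ K := by
    rw [hg]
    refine natDegree_comp_le.trans ?_
    have h1 : (C ((n : ℂ) / 2) * (1 + X)).natDegree ≤ 1 := by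
      refine (natDegree_C_mul_le _ _).trans ((natDegree_add_le _ _).trans (by simp))
    calc _ ≤ K * 1 := Nat.mul_le_mul (qP_natDegree _ _ _) h1
      _ = K := mul_one K
  obtain ⟨L, hLd, hL⟩ := cheb_trunc g k K hkK hgd (1 + δ) B (by linarith) (by
    intro w hw
    have := qP_bound n K (by omega) hn (tau S T) (tau_le S T hT) δ hδ0 w hw
    rw [hg, eval_comp]
    simpa using this)
  set L' : ℂ[X] := L.comp (C (2 / (n : ℂ)) * X - 1) with hL'
  have hL'd : L'.natDegree ≤ k := by
    refine natDegree_comp_le.trans ?_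
    have h1 : (C (2 / (n : ℂ)) * X - 1).natDegree ≤ 1 := by
      refine (natDegree_sub_le _ _).trans ?_
      have := natDegree_C_mul_le (2 / (n : ℂ)) X
      simp at this ⊢
      exact this
    calc _ ≤ k * 1 := Nat.mul_le_mul hLd h1
      _ = k := mul_one k
  have hz := poly_zero μ ν k h L' hL'd
  set ε : ℝ := 2 * K * B / (1 + δ) ^ k with hε
  have hpt : ∀ x : Fin n → Bool, ‖q.eval (wt x : ℂ) - L'.eval (wt x : ℂ)‖ ≤ ε := by
    intro x
    have hw : (wt x : ℝ) ≤ n := by exact_mod_cast wt_le x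
    have hw0 : (0 : ℝ) ≤ wt x := by positivity
    have := hL (2 / n * wt x - 1) (by
      rw [abs_le]
      constructor
      · have : 0 ≤ 2 / (n : ℝ) * wt x := by positivity
        linarith
      · have : 2 / (n : ℝ) * wt x ≤ 2 := by rw [div_mul_eq_mul_div, div_le_iff₀ hn0]; linarith
        linarith)
    rw [hL', eval_comp]
    rw [hg, eval_comp] at this
    convert this using 3
    · congr 1; simp; field_simp
    · congr 1; simp
  have hqe : ∀ x : Fin n → Bool, q.eval (wt x : ℂ) = ((∑ w ∈ Finset.range (K + 1),
      tau S T w / (n.choose K : ℝ) * (((wt x).choose w : ℝ) * ((n - wt x).choose (K - w) : ℝ)) : ℝ) : ℂ) := by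
    intro x
    rw [hq, qP_eval]
    have e : (n : ℂ) - (wt x : ℂ) = ((n - wt x : ℕ) : ℂ) := by rw [Nat.cast_sub (wt_le x)]
    simp only [e, cb_nat]
    push_cast; rfl
  have f1 := test_formula S T hT μ sμ
  have f2 := test_formula S T hT ν sν
  rw [hS] at f1 f2
  have hdiff : ((∑ x, μ x * T x - ∑ x, ν x * T x : ℝ) : ℂ) =
      ∑ x, ((μ x - ν x : ℝ) : ℂ) * (q.eval (wt x : ℂ) - L'.eval (wt x : ℂ)) := by
    simp only [mul_sub]
    rw [Finset.sum_sub_distrib, hz, sub_zero, f1, f2, ← Finset.sum_sub_distrib, Complex.ofReal_sum]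
    apply Finset.sum_congr rfl
    intro x _
    rw [hqe, ← sub_mul, Complex.ofReal_mul]
  have hε0 : 0 ≤ ε := by rw [hε, hB]; positivity
  have hbd : |∑ x, μ x * T x - ∑ x, ν x * T x| ≤ 2 * ε := by
    rw [← Real.norm_eq_abs, ← Complex.norm_real, hdiff]
    calc _ ≤ ∑ x, ‖((μ x - ν x : ℝ) : ℂ) * (q.eval (wt x : ℂ) - L'.eval (wt x : ℂ))‖ := norm_sum_le _ _
      _ ≤ ∑ x, (μ x + ν x) * ε := by
        apply Finset.sum_le_sum
        intro x _
        rw [norm_mul, Complex.norm_real, Real.norm_eq_abs]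
        have h1 := hμ.1 x
        have h2 := hν.1 x
        have : |μ x - ν x| ≤ μ x + ν x := by rw [abs_le]; constructor <;> linarith
        have := hpt x
        gcongr
      _ = 2 * ε := by rw [← Finset.sum_mul, Finset.sum_add_distrib, hμ.2, hν.2]; norm_num
  refine hbd.trans ?_
  have hpow : Real.exp (k * (δ / 2)) ≤ (1 + δ) ^ k := by
    rw [Real.exp_nat_mul]
    gcongr
    have h5 := Real.add_one_le_exp (-(δ / 2))
    rw [Real.exp_neg] at h5
    have h6 := Real.exp_pos (δ / 2)
    have h7 := mul_le_mul_of_nonneg_left h5 h6.le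
    rw [mul_inv_cancel₀ h6.ne'] at h7
    nlinarith
  have hlast : Real.exp (3 * K * δ ^ 2) / (1 + δ) ^ k ≤ Real.exp (-(k : ℝ) ^ 2 / (64 * K)) := by
    calc _ ≤ Real.exp (3 * K * δ ^ 2) / Real.exp (k * (δ / 2)) := by gcongr
      _ = Real.exp (-(k : ℝ) ^ 2 / (64 * K)) := by
        rw [← Real.exp_sub]; congr 1; rw [hδ]; field_simp; ring
  calc 2 * ε = 16 * K * (K + 1) * K * Real.exp 1 * (Real.exp (3 * K * δ ^ 2) / (1 + δ) ^ k) := by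
        rw [hε, hB]; ring
    _ ≤ _ := by gcongr

lemma trivial_bound {n : ℕ} (μ ν : (Fin n → Bool) → ℝ) (hμ : IsProb μ) (hν : IsProb ν)
    (S : Finset (Fin n)) (T : (Fin n → Bool) → ℝ) (hT : TestOn S T) :
    |∑ x, μ x * T x - ∑ x, ν x * T x| ≤ 1 := by
  have key : ∀ μ : (Fin n → Bool) → ℝ, IsProb μ → 0 ≤ ∑ x, μ x * T x ∧ ∑ x, μ x * T x ≤ 1 := by
    intro μ hμ
    constructor
    · apply Finset.sum_nonneg
      intro x _
      have := hμ.1 x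
      rcases hT.1 x with h | h <;> rw [h] <;> linarith
    · rw [← hμ.2]
      apply Finset.sum_le_sum
      intro x _
      have := hμ.1 x
      rcases hT.1 x with h | h <;> rw [h] <;> linarith
  have a := key μ hμ
  have b := key ν hν
  rw [abs_le]; constructor <;> linarith

theorem stmt4 :
    ∃ C : ℝ, 0 < C ∧
      ∀ (n k K : ℕ), 1 ≤ k → k < K → (K : ℝ) ≤ (n : ℝ) / 64 →
        ∀ μ ν : (Fin n → Bool) → ℝ, IsProb μ → IsProb ν → SymmDist μ → SymmDist ν →
          PerfIndist μ ν k →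
          ∀ S : Finset (Fin n), S.card = K →
            ∀ T : (Fin n → Bool) → ℝ, TestOn S T →
              |(∑ x : Fin n → Bool, μ x * T x) - ∑ x : Fin n → Bool, ν x * T x| ≤
                C * (K : ℝ) ^ ((3 : ℝ) / 2) * Real.exp (-(k : ℝ) ^ 2 / (1156 * K)) := by
  refine ⟨100, by norm_num, ?_⟩
  intro n k K hk hkK hKn μ ν hμ hν sμ sν h S hS T hT
  have hn : 64 * K ≤ n := by
    have : (64 : ℝ) * K ≤ n := by linarith
    exact_mod_cast this
  have hKr : (1 : ℝ) < K := by exact_mod_cast (by omega : 1 < K)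
  have h1 := main_bound hk hkK hn μ ν hμ hν sμ sν h S hS T hT
  have h2 := trivial_bound μ ν hμ hν S T hT
  set E : ℝ := Real.exp (-(k : ℝ) ^ 2 / (1156 * K)) with hE
  set t : ℝ := (K : ℝ) ^ ((3 : ℝ) / 2) * E with ht
  have hE0 : 0 < E := Real.exp_pos _
  have hK3 : ((K : ℝ) ^ ((3 : ℝ) / 2)) ^ 2 = (K : ℝ) ^ 3 := by
    rw [← Real.rpow_natCast, ← Real.rpow_mul (by linarith), ← Real.rpow_natCast]; norm_num
  have ht0 : 0 ≤ t := by positivity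
  rw [mul_assoc, ← ht]
  rcases le_or_gt 1 t with hc | hc
  · linarith
  · have ht2 : t ^ 2 = (K : ℝ) ^ 3 * E ^ 2 := by rw [ht, mul_pow, hK3]
    have hE2 : Real.exp (-(k : ℝ) ^ 2 / (64 * K)) ≤ E ^ 2 := by
      rw [hE, ← Real.exp_nat_mul]
      apply Real.exp_le_exp.mpr
      push_cast
      rw [← mul_div_assoc, div_le_div_iff₀ (by positivity) (by positivity)]
      have : 0 ≤ (k : ℝ) ^ 2 * K := by positivity
      nlinarith
    have he : Real.exp 1 ≤ 3 := by linarith [Real.exp_one_lt_d9]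
    calc _ ≤ _ := h1
      _ ≤ 16 * K * (2 * K) * K * 3 * E ^ 2 := by
        gcongr; linarith
      _ = 96 * t ^ 2 := by rw [ht2]; ring
      _ ≤ 100 * t := by nlinarith
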